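/- arXiv:1002.0419 — 6 statements merged into one kernel-verified Lean document; each statement's English description precedes it below -/
import Mathlib

section
/- Let Q be a commutative noetherian local ring and let f, g be regular elements in Q that are non-units. Set A = Q/(fg) and let x, y ∈ A denote the cosets of f, g modulo (fg). Then x, y is an exact pair of zero divisors in A, and this pair is regular (i.e. (x) ∩ (y) = 0 in A) if and only if (f) ∩ (g) = (fg) in Q. -/
/-!
Formalization of results from "Construction of totally reflexive modules
from an exact pair of zero divisors" by Henrik Holm.
-/

noncomputable section

/-- Non-units `x, y` in `A` form an *exact pair of zero divisors* if
`Ann_A(x) = (y)` and `Ann_A(y) = (x)`. -/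
def IsExactZeroDivisorPair {A : Type*} [CommRing A] (x y : A) : Prop :=
  ¬ IsUnit x ∧ ¬ IsUnit y ∧
    (∀ a : A, a * x = 0 ↔ a ∈ Ideal.span {y}) ∧
    (∀ a : A, a * y = 0 ↔ a ∈ Ideal.span {x})

/-!
Everything is pulled back along a surjection `φ : Q → A` with kernel `(fg)`. The ideals containing
the kernel correspond to the ideals of `A`, compatibly with intersections, which settles the
regularity criterion. As `(fg) ⊆ (g)`, membership in `(φ g)` is divisibility by `g` in `Q`; and
`φ (a f) = 0` says that `g f` divides `a f`, from which the regular element `f` can be cancelled.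
-/

section Surjection

variable {Q A : Type*} [CommRing Q] [CommRing A] {φ : Q →+* A}

theorem comap_map_eq_self_of_ker_le (hφ : Function.Surjective φ) {J : Ideal Q}
    (hJ : RingHom.ker φ ≤ J) : (J.map φ).comap φ = J := by
  rw [Ideal.comap_map_of_surjective' φ hφ, sup_eq_left.mpr hJ]

theorem map_inf_map_eq_bot_iff_inf_eq_ker (hφ : Function.Surjective φ) {J K : Ideal Q}
    (hJ : RingHom.ker φ ≤ J) (hK : RingHom.ker φ ≤ K) :
    J.map φ ⊓ K.map φ = ⊥ ↔ J ⊓ K = RingHom.ker φ := by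
  rw [← (Ideal.comap_injective_of_surjective φ hφ).eq_iff, Ideal.comap_inf,
    comap_map_eq_self_of_ker_le hφ hJ, comap_map_eq_self_of_ker_le hφ hK,
    RingHom.ker_eq_comap_bot]

theorem map_dvd_map_iff_of_ker_le_span (hφ : Function.Surjective φ) {d a : Q}
    (hd : RingHom.ker φ ≤ Ideal.span {d}) : φ d ∣ φ a ↔ d ∣ a := by
  rw [← Ideal.mem_span_singleton, ← Set.image_singleton, ← Ideal.map_span, ← Ideal.mem_comap,
    comap_map_eq_self_of_ker_le hφ hd, Ideal.mem_span_singleton]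

theorem isUnit_map_iff_of_ker_le_span (hφ : Function.Surjective φ) {d : Q}
    (hd : RingHom.ker φ ≤ Ideal.span {d}) : IsUnit (φ d) ↔ IsUnit d := by
  rw [isUnit_iff_dvd_one, ← map_one φ, map_dvd_map_iff_of_ker_le_span hφ hd, isUnit_iff_dvd_one]

theorem mul_map_eq_zero_iff_mem_span_of_ker_eq (hφ : Function.Surjective φ) {f g : Q}
    (hker : RingHom.ker φ = Ideal.span {f * g}) (hf : IsLeftRegular f) (a : A) :
    a * φ f = 0 ↔ a ∈ Ideal.span {φ g} := by
  obtain ⟨a, rfl⟩ := hφ a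
  have hg : RingHom.ker φ ≤ Ideal.span {g} :=
    hker.trans_le (Ideal.span_singleton_le_span_singleton.mpr (dvd_mul_left g f))
  calc φ a * φ f = 0
      ↔ f * g ∣ f * a := by
        rw [← map_mul, ← RingHom.mem_ker, hker, Ideal.mem_span_singleton, mul_comm a f]
    _ ↔ g ∣ a := hf.dvd_cancel_left
    _ ↔ φ a ∈ Ideal.span {φ g} := by
        rw [Ideal.mem_span_singleton, map_dvd_map_iff_of_ker_le_span hφ hg]

theorem exactZeroDivisorPair_of_quotient_general (hφ : Function.Surjective φ) {f g : Q}
    (hker : RingHom.ker φ = Ideal.span {f * g}) (hf : ¬ IsUnit f) (hg : ¬ IsUnit g)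
    (hfreg : IsLeftRegular f) (hgreg : IsLeftRegular g) :
    IsExactZeroDivisorPair (φ f) (φ g) ∧
      (Ideal.span {φ f} ⊓ Ideal.span {φ g} = ⊥ ↔
        Ideal.span {f} ⊓ Ideal.span {g} = Ideal.span {f * g}) := by
  have hker_le_f : RingHom.ker φ ≤ Ideal.span {f} :=
    hker.trans_le (Ideal.span_singleton_le_span_singleton.mpr (dvd_mul_right f g))
  have hker_le_g : RingHom.ker φ ≤ Ideal.span {g} :=
    hker.trans_le (Ideal.span_singleton_le_span_singleton.mpr (dvd_mul_left g f))
  have hker_swap : RingHom.ker φ = Ideal.span {g * f} := by rw [hker, mul_comm]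
  refine ⟨⟨?_, ?_, ?_, ?_⟩, ?_⟩
  · rwa [isUnit_map_iff_of_ker_le_span hφ hker_le_f]
  · rwa [isUnit_map_iff_of_ker_le_span hφ hker_le_g]
  · exact mul_map_eq_zero_iff_mem_span_of_ker_eq hφ hker hfreg
  · exact mul_map_eq_zero_iff_mem_span_of_ker_eq hφ hker_swap hgreg
  · simpa only [Ideal.map_span, Set.image_singleton, hker] using
      map_inf_map_eq_bot_iff_inf_eq_ker hφ hker_le_f hker_le_g

end Surjection

/-- **Example (2.4).** Let `Q` be a commutative noetherian local ring and let
`f, g` be regular non-units in `Q`. In `A = Q/(fg)` the cosets `x, y` of `f, g`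
form an exact pair of zero divisors, and this pair is regular (meaning
`(x) ∩ (y) = 0`) if and only if `(f) ∩ (g) = (fg)` in `Q`. -/
theorem exactZeroDivisorPair_of_quotient {Q : Type*} [CommRing Q]
    [IsNoetherianRing Q] [IsLocalRing Q] {f g : Q}
    (hf : ¬ IsUnit f) (hg : ¬ IsUnit g)
    (hfreg : Function.Injective fun q : Q => f * q)
    (hgreg : Function.Injective fun q : Q => g * q) :
    IsExactZeroDivisorPair
        (Ideal.Quotient.mk (Ideal.span {f * g}) f)
        (Ideal.Quotient.mk (Ideal.span {f * g}) g) ∧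
      ((Ideal.span {Ideal.Quotient.mk (Ideal.span {f * g}) f} ⊓
          Ideal.span {Ideal.Quotient.mk (Ideal.span {f * g}) g} = ⊥) ↔
        Ideal.span ({f} : Set Q) ⊓ Ideal.span ({g} : Set Q) =
          Ideal.span {f * g}) :=
  exactZeroDivisorPair_of_quotient_general Ideal.Quotient.mk_surjective Ideal.mk_ker hf hg
    hfreg hgreg
end
end

section
/- Let Q be a commutative noetherian local ring, and let f, g be regular elements in Q that are non-units such that (f) ∩ (g) = (fg). Set A = Q/(fg) and let x, y ∈ A denote the cosets of f, g, which form a regular exact pair of zero divisors in A. If depth Q > 2, then there exists an element of A that is regular on the A-module A/(x, y); equivalently, the A-module A/(x, y) has positive depth. -/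
/-!
Formalization of results from "Construction of totally reflexive modules
from an exact pair of zero divisors" by Henrik Holm.
-/

noncomputable section

/-!
By the Rees theorem, a regular sequence of length three in an ideal `I` makes `Ext^i(Q/I, Q)` vanish
for `i < 3`. Since `(f) ∩ (g) = (fg)`, the sequence `f, g` is weakly regular on `Q`, and passing to
the quotient by each of its terms shortens the range of vanishing by one. What survives is
`Hom(Q/I, Q/(f, g)) = 0`, which over a noetherian ring says that `I` contains an element regular on
`Q/(f, g) = A/(x, y)`.
-/

section ExtVanishing

open CategoryTheory CategoryTheory.Abelian RingTheory.Sequence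

universe u v

variable {R : Type u} [CommRing R]

lemma subsingleton_ext_quotSMulTop {N M : ModuleCat.{v} R} [Small.{v} R] {r : R}
    (hr : IsSMulRegular M r) {i : ℕ} (hi : Subsingleton (Ext N M i))
    (hi' : Subsingleton (Ext N M (i + 1))) :
    Subsingleton (Ext N (ModuleCat.of R (QuotSMulTop r M)) i) := by
  have isZero_left := AddCommGrpCat.isZero_of_iff_subsingleton.mpr hi
  have isZero_right := AddCommGrpCat.isZero_of_iff_subsingleton.mpr hi'
  have exact := Ext.covariant_sequence_exact₃' N hr.smulShortComplex_shortExact i (i + 1) rfl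
  exact AddCommGrpCat.subsingleton_of_isZero <|
    exact.isZero_of_both_zeros (isZero_left.eq_zero_of_src _) (isZero_right.eq_zero_of_tgt _)

variable [IsNoetherianRing R] [Small.{v} R]

lemma exists_mem_annihilator_isSMulRegular_quotient {N M : ModuleCat.{v} R}
    [Module.Finite R N] [Module.Finite R M] {ss : List R} (hss : IsWeaklyRegular M ss)
    (hext : ∀ i ≤ ss.length, Subsingleton (Ext N M i)) :
    ∃ r ∈ Module.annihilator R N,
      IsSMulRegular (M ⧸ (Ideal.ofList ss • ⊤ : Submodule R M)) r := by
  induction ss generalizing M with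
  | nil =>
    have : Subsingleton (N →ₗ[R] M) :=
      ((Ext.addEquiv₀ (X := N) (Y := M)).trans
        ModuleCat.homAddEquiv).subsingleton_congr.mp (hext 0 le_rfl)
    obtain ⟨r, hr, hreg⟩ := IsSMulRegular.subsingleton_linearMap_iff.mp this
    have ofList_nil_smul : (Ideal.ofList ([] : List R) • ⊤ : Submodule R M) = ⊥ := by
      rw [Ideal.ofList_nil, Submodule.bot_smul]
    exact ⟨r, hr,
      ((Submodule.quotEquivOfEqBot _ ofList_nil_smul).isSMulRegular_congr r).mpr hreg⟩
  | cons s ss ih =>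
    rw [isWeaklyRegular_cons_iff] at hss
    obtain ⟨r, hr, hreg⟩ := ih (M := ModuleCat.of R (QuotSMulTop s M)) hss.2 fun i hi =>
      subsingleton_ext_quotSMulTop hss.1 (hext i (Nat.le_succ_of_le hi))
        (hext (i + 1) (Nat.succ_le_succ hi))
    let quotEquiv := Submodule.quotOfListConsSMulTopEquivQuotSMulTopInner M s ss
    exact ⟨r, hr, (quotEquiv.isSMulRegular_congr r).mpr hreg⟩

theorem exists_mem_isSMulRegular_quotient_of_length_lt {M : Type v} [AddCommGroup M] [Module R M]
    [Module.Finite R M] {I : Ideal R} (hI : I • (⊤ : Submodule R M) < ⊤) {rs ss : List R}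
    (hrs : IsRegular M rs) (hmem : ∀ r ∈ rs, r ∈ I) (hss : IsWeaklyRegular M ss)
    (hlen : ss.length < rs.length) :
    ∃ r ∈ I, IsSMulRegular (M ⧸ (Ideal.ofList ss • ⊤ : Submodule R M)) r := by
  let N := ModuleCat.of R (Shrink.{v} (R ⧸ I))
  have : Module.Finite R N := Module.Finite.equiv (Shrink.linearEquiv R (R ⧸ I)).symm
  have hN : Module.annihilator R N = I :=
    (Shrink.linearEquiv R (R ⧸ I)).annihilator_eq.trans Ideal.annihilator_quotient
  have support_le : Module.support R N ⊆ PrimeSpectrum.zeroLocus I := by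
    rw [Module.support_eq_zeroLocus, hN]
  have hext := ModuleCat.subsingleton_ext_of_exists_isRegular I N support_le (ModuleCat.of R M)
    hI rs hmem hrs
  obtain ⟨r, hr, hreg⟩ := exists_mem_annihilator_isSMulRegular_quotient
    (M := ModuleCat.of R M) hss fun i hi => hext i (hi.trans_lt hlen)
  exact ⟨r, hN ▸ hr, hreg⟩

end ExtVanishing

section Quotients

variable {R : Type*} [CommRing R]

open scoped Pointwise in
lemma isWeaklyRegular_pair_of_inf_span_le {f g : R} (hf : IsSMulRegular R f)
    (hg : IsSMulRegular R g) (hfg : Ideal.span {f} ⊓ Ideal.span {g} ≤ Ideal.span {f * g}) :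
    RingTheory.Sequence.IsWeaklyRegular R [f, g] := by
  have smul_top_eq (r : R) : r • (⊤ : Ideal R) = Ideal.span {r} := by
    rw [← Submodule.ideal_span_singleton_smul, smul_eq_mul, Ideal.mul_top]
  rw [RingTheory.Sequence.isWeaklyRegular_cons_iff,
    RingTheory.Sequence.isWeaklyRegular_singleton_iff]
  refine ⟨hf, (hg.isSMulRegular_on_quot_iff_smul_top_inf_eq_smul _).mpr ?_⟩
  rwa [smul_smul, smul_top_eq, smul_top_eq, smul_top_eq, inf_comm, mul_comm g]

lemma isSMulRegular_quotient_map_mk_iff {I J : Ideal R} (hIJ : I ≤ J) {r : R} :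
    IsSMulRegular ((R ⧸ I) ⧸ J.map (Ideal.Quotient.mk I)) (Ideal.Quotient.mk I r) ↔
      IsSMulRegular (R ⧸ J) r := by
  rw [isSMulRegular_quotient_iff_mem_of_smul_mem, isSMulRegular_quotient_iff_mem_of_smul_mem,
    Ideal.Quotient.mk_surjective.forall]
  simp only [smul_eq_mul, ← map_mul, Ideal.mem_quotient_iff_mem hIJ]

lemma not_isUnit_mk_of_mem {I J : Ideal R} (hIJ : I ≤ J) (hJ : J ≠ ⊤) {r : R} (hr : r ∈ J) :
    ¬ IsUnit (Ideal.Quotient.mk I r) := by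
  have := Ideal.Quotient.nontrivial_iff.mpr hJ
  intro hunit
  have hunit_zero := hunit.map (Ideal.Quotient.factor hIJ)
  rw [Ideal.Quotient.factor_mk, Ideal.Quotient.eq_zero_iff_mem.mpr hr] at hunit_zero
  exact not_isUnit_zero hunit_zero

end Quotients

theorem exists_regular_on_quotient_of_depth_general {Q : Type*} [CommRing Q]
    [IsNoetherianRing Q] {I : Ideal Q} (hI : I ≠ ⊤) {f g : Q} (hmem : f * g ∈ I)
    (hfreg : Function.Injective fun q : Q => f * q)
    (hgreg : Function.Injective fun q : Q => g * q)
    (hfg : Ideal.span ({f} : Set Q) ⊓ Ideal.span ({g} : Set Q) =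
      Ideal.span {f * g})
    (hdepth : ∃ rs : List Q, rs.length = 3 ∧ (∀ r ∈ rs, r ∈ I) ∧
      RingTheory.Sequence.IsRegular Q rs) :
    ∃ a : Q ⧸ Ideal.span {f * g}, ¬ IsUnit a ∧
      Function.Injective
        (fun m : (Q ⧸ Ideal.span {f * g}) ⧸
            Ideal.span {Ideal.Quotient.mk (Ideal.span {f * g}) f,
              Ideal.Quotient.mk (Ideal.span {f * g}) g} => a • m) := by
  obtain ⟨rs, hlen, hrsI, hrs⟩ := hdepth
  have hI_smul : I • (⊤ : Ideal Q) < ⊤ := by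
    rwa [smul_eq_mul, Ideal.mul_top, lt_top_iff_ne_top]
  obtain ⟨r, hrI, hr⟩ := exists_mem_isSMulRegular_quotient_of_length_lt hI_smul hrs hrsI
    (isWeaklyRegular_pair_of_inf_span_le hfreg hgreg hfg.le) (by simp [hlen])
  have ofList_pair_smul : (Ideal.ofList [f, g] • ⊤ : Ideal Q) = Ideal.span {f, g} := by
    rw [smul_eq_mul, Ideal.mul_top, Ideal.ofList_cons, Ideal.ofList_singleton, Ideal.span_insert]
  have mul_le : Ideal.span {f * g} ≤ Ideal.span {f, g} :=
    (Ideal.span_singleton_le_iff_mem _).mpr <|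
      Ideal.mul_mem_right g _ (Ideal.subset_span (Set.mem_insert f {g}))
  refine ⟨Ideal.Quotient.mk _ r,
    not_isUnit_mk_of_mem ((Ideal.span_singleton_le_iff_mem I).mpr hmem) hI hrI, ?_⟩
  rw [ofList_pair_smul, ← isSMulRegular_quotient_map_mk_iff mul_le, Ideal.map_span,
    Set.image_pair] at hr
  exact hr

/-- **Lemma (2.6).** Let `Q` be a commutative noetherian local ring and let
`f, g` be regular non-units in `Q` with `(f) ∩ (g) = (fg)`, so that the cosets
`x, y` of `f, g` form a regular exact pair of zero divisors in `A = Q/(fg)`.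
If `depth Q > 2` (i.e. there is a `Q`-regular sequence of length `3` contained
in the maximal ideal), then there exists an element of `A` that is regular on
the `A`-module `A/(x, y)`, i.e. a non-unit acting injectively on `A/(x, y)`. -/
theorem exists_regular_on_quotient_of_depth {Q : Type*} [CommRing Q]
    [IsNoetherianRing Q] [IsLocalRing Q] {f g : Q}
    (hf : ¬ IsUnit f) (hg : ¬ IsUnit g)
    (hfreg : Function.Injective fun q : Q => f * q)
    (hgreg : Function.Injective fun q : Q => g * q)
    (hfg : Ideal.span ({f} : Set Q) ⊓ Ideal.span ({g} : Set Q) =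
      Ideal.span {f * g})
    (hdepth : ∃ rs : List Q, rs.length = 3 ∧
      (∀ r ∈ rs, r ∈ IsLocalRing.maximalIdeal Q) ∧
      RingTheory.Sequence.IsRegular Q rs) :
    ∃ a : Q ⧸ Ideal.span {f * g}, ¬ IsUnit a ∧
      Function.Injective
        (fun m : (Q ⧸ Ideal.span {f * g}) ⧸
            Ideal.span {Ideal.Quotient.mk (Ideal.span {f * g}) f,
              Ideal.Quotient.mk (Ideal.span {f * g}) g} => a • m) := by
  exact exists_regular_on_quotient_of_depth_general (IsLocalRing.maximalIdeal.isMaximal Q).ne_top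
    (Ideal.mul_mem_right g _ hf) hfreg hgreg hfg hdepth
end
end

section
/- Let A be a commutative noetherian local ring, let x, y ∈ A be an exact pair of zero divisors, and let a ∈ A. For the A-linear maps γ_a, η_a : A² → A², one has γ_a ∘ η_a = 0 = η_a ∘ γ_a, Ker γ_a = Im η_a, and Ker η_a = Im γ_a; that is, the doubly infinite complex ⋯ → A² —γ_a→ A² —η_a→ A² —γ_a→ A² → ⋯ is exact. Moreover, the A-dual complex, whose differentials are given by the transposed matrices γ_aᵗ and η_aᵗ, is also exact. -/
/-!
Formalization of results from "Construction of totally reflexive modules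
from an exact pair of zero divisors" by Henrik Holm.
-/

noncomputable section

open Matrix in
/-- The matrix `γ_a = [[x, a], [0, y]]`. -/
def gammaMat {A : Type*} [CommRing A] (x y a : A) : Matrix (Fin 2) (Fin 2) A :=
  !![x, a; 0, y]

open Matrix in
/-- The matrix `η_a = [[y, -a], [0, x]]`. -/
def etaMat {A : Type*} [CommRing A] (x y a : A) : Matrix (Fin 2) (Fin 2) A :=
  !![y, -a; 0, x]

/-- `G_a`, the cokernel of `γ_a : A² → A²`. -/
abbrev Gmod {A : Type*} [CommRing A] (x y a : A) : Type _ :=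
  (Fin 2 → A) ⧸ LinearMap.range (Matrix.toLin' (gammaMat x y a))

/-- `H_a`, the cokernel of `η_a : A² → A²`. -/
abbrev Hmod {A : Type*} [CommRing A] (x y a : A) : Type _ :=
  (Fin 2 → A) ⧸ LinearMap.range (Matrix.toLin' (etaMat x y a))

/-!
`A² —η_a→ A² —γ_a→ A²` is an extension of `A —x→ A —y→ A` by `A —y→ A —x→ A`, so exactness is
inherited from the ends: solve for the second coordinate, correct the first one, solve again.
The matrices have two symmetries, `η_a = γ_{-a}` with `x, y` interchanged, and `γ_aᵗ` is `γ_a` with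
`x, y` interchanged, conjugated by the reversal of coordinates. They reduce the other three
exactness claims to this one.
-/

open Function Matrix

section Exactness

variable {A : Type*} [CommRing A]

theorem toLin'_submatrix_comp_funCongrLeft {m n m' n' : Type*} [Fintype n] [DecidableEq n]
    [Fintype n'] [DecidableEq n'] (M : Matrix m n A) (eₘ : m' ≃ m) (eₙ : n' ≃ n) :
    toLin' (M.submatrix eₘ eₙ) ∘ₗ (LinearEquiv.funCongrLeft A A eₙ).toLinearMap =
      (LinearEquiv.funCongrLeft A A eₘ).toLinearMap ∘ₗ toLin' M := by
  refine LinearMap.ext fun v ↦ ?_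
  simp [LinearMap.funLeft, Function.comp_assoc]

theorem exact_toLin'_submatrix_equiv {k l m k' l' m' : Type*} [Fintype l] [DecidableEq l]
    [Fintype m] [DecidableEq m] [Fintype l'] [DecidableEq l'] [Fintype m'] [DecidableEq m']
    {M : Matrix l m A} {N : Matrix k l A} (eₖ : k' ≃ k) (eₗ : l' ≃ l) (eₘ : m' ≃ m)
    (h : Exact (toLin' M) (toLin' N)) :
    Exact (toLin' (M.submatrix eₗ eₘ)) (toLin' (N.submatrix eₖ eₗ)) :=
  Exact.of_ladder_linearEquiv_of_exact (toLin'_submatrix_comp_funCongrLeft M eₗ eₘ)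
    (toLin'_submatrix_comp_funCongrLeft N eₖ eₗ) h

theorem exact_toLin'_upperTriangular {p p' q q' a a' : A}
    (hp : Exact (p' * ·) (p * ·)) (hq : Exact (q' * ·) (q * ·)) (h : p * a' + a * q' = 0) :
    Exact (toLin' !![p', a'; 0, q']) (toLin' !![p, a; 0, q]) := by
  refine LinearMap.exact_of_comp_of_mem_range ?_ fun v hv ↦ ?_
  · have hpp' : p * p' = 0 := by simpa using hp.apply_apply_eq_zero 1
    have hqq' : q * q' = 0 := by simpa using hq.apply_apply_eq_zero 1
    have hmul : !![p, a; 0, q] * !![p', a'; 0, q'] = 0 := by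
      ext i j
      fin_cases i <;> fin_cases j <;> simp [hpp', hqq', h]
    rw [← toLin'_mul, hmul, map_zero]
  · obtain ⟨hv₀, hv₁⟩ : p * v 0 + a * v 1 = 0 ∧ q * v 1 = 0 := by
      simpa [funext_iff, mulVec, dotProduct] using hv
    obtain ⟨w, hw : q' * w = v 1⟩ := (hq _).1 hv₁
    obtain ⟨t, ht : p' * t = v 0 - a' * w⟩ := (hp (v 0 - a' * w)).1 <| by
      linear_combination hv₀ + a * hw - w * h
    refine ⟨![t, w], ?_⟩
    ext i
    fin_cases i <;> simp [mul_comm t, mul_comm w, ht, hw]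

theorem etaMat_eq_gammaMat (x y a : A) : etaMat x y a = gammaMat y x (-a) := rfl

theorem transpose_gammaMat (x y a : A) :
    (gammaMat x y a)ᵀ = (gammaMat y x a).submatrix Fin.revPerm Fin.revPerm := by
  ext i j
  fin_cases i <;> fin_cases j <;> rfl

theorem transpose_etaMat (x y a : A) :
    (etaMat x y a)ᵀ = (etaMat y x a).submatrix Fin.revPerm Fin.revPerm := by
  simp only [etaMat_eq_gammaMat, transpose_gammaMat]

variable {x y : A}

theorem exact_etaMat_gammaMat (hx : Exact (y * ·) (x * ·)) (hy : Exact (x * ·) (y * ·)) (a : A) :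
    Exact (toLin' (etaMat x y a)) (toLin' (gammaMat x y a)) :=
  exact_toLin'_upperTriangular hx hy (by ring)

theorem exact_gammaMat_etaMat (hx : Exact (y * ·) (x * ·)) (hy : Exact (x * ·) (y * ·)) (a : A) :
    Exact (toLin' (gammaMat x y a)) (toLin' (etaMat x y a)) := by
  simpa only [etaMat_eq_gammaMat, neg_neg] using exact_etaMat_gammaMat hy hx (-a)

theorem exact_transpose_etaMat_gammaMat (hx : Exact (y * ·) (x * ·)) (hy : Exact (x * ·) (y * ·))
    (a : A) : Exact (toLin' (etaMat x y a)ᵀ) (toLin' (gammaMat x y a)ᵀ) := by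
  rw [transpose_etaMat, transpose_gammaMat]
  exact exact_toLin'_submatrix_equiv _ _ _ (exact_etaMat_gammaMat hy hx a)

theorem exact_transpose_gammaMat_etaMat (hx : Exact (y * ·) (x * ·)) (hy : Exact (x * ·) (y * ·))
    (a : A) : Exact (toLin' (gammaMat x y a)ᵀ) (toLin' (etaMat x y a)ᵀ) := by
  rw [transpose_etaMat, transpose_gammaMat]
  exact exact_toLin'_submatrix_equiv _ _ _ (exact_gammaMat_etaMat hy hx a)

namespace IsExactZeroDivisorPair

theorem symm (hxy : IsExactZeroDivisorPair x y) : IsExactZeroDivisorPair y x :=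
  ⟨hxy.2.1, hxy.1, hxy.2.2.2, hxy.2.2.1⟩

theorem exact_mul (hxy : IsExactZeroDivisorPair x y) : Exact (y * ·) (x * ·) := fun b ↦
  calc x * b = 0 ↔ b * x = 0 := by rw [mul_comm]
    _ ↔ b ∈ Ideal.span {y} := hxy.2.2.1 b
    _ ↔ b ∈ Set.range (y * ·) := by simp only [Ideal.mem_span_singleton', mul_comm, Set.mem_range]

end IsExactZeroDivisorPair

end Exactness

theorem gamma_eta_complex_exact_general {A : Type*} [CommRing A] {x y : A}
    (hx : Exact (y * ·) (x * ·)) (hy : Exact (x * ·) (y * ·)) (a : A) :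
    (Matrix.toLin' (gammaMat x y a)).comp (Matrix.toLin' (etaMat x y a)) = 0 ∧
    (Matrix.toLin' (etaMat x y a)).comp (Matrix.toLin' (gammaMat x y a)) = 0 ∧
    LinearMap.ker (Matrix.toLin' (gammaMat x y a)) =
      LinearMap.range (Matrix.toLin' (etaMat x y a)) ∧
    LinearMap.ker (Matrix.toLin' (etaMat x y a)) =
      LinearMap.range (Matrix.toLin' (gammaMat x y a)) ∧
    LinearMap.ker (Matrix.toLin' (gammaMat x y a)ᵀ) =
      LinearMap.range (Matrix.toLin' (etaMat x y a)ᵀ) ∧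
    LinearMap.ker (Matrix.toLin' (etaMat x y a)ᵀ) =
      LinearMap.range (Matrix.toLin' (gammaMat x y a)ᵀ) := by
  have hηγ := exact_etaMat_gammaMat hx hy a
  have hγη := exact_gammaMat_etaMat hx hy a
  exact ⟨hηγ.linearMap_comp_eq_zero, hγη.linearMap_comp_eq_zero,
    hηγ.linearMap_ker_eq, hγη.linearMap_ker_eq,
    (exact_transpose_etaMat_gammaMat hx hy a).linearMap_ker_eq,
    (exact_transpose_gammaMat_etaMat hx hy a).linearMap_ker_eq⟩

open Matrix in
/-- **Lemma (3.3).** For an exact pair of zero divisors `x, y` and any `a ∈ A`,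
the maps `γ_a, η_a : A² → A²` satisfy `γ_a ∘ η_a = 0 = η_a ∘ γ_a`,
`Ker γ_a = Im η_a` and `Ker η_a = Im γ_a`, i.e. the doubly infinite complex
`⋯ → A² —γ_a→ A² —η_a→ A² → ⋯` is exact; and the dual complex, with
differentials the transposed matrices, is also exact. -/
theorem gamma_eta_complex_exact {A : Type*} [CommRing A] [IsNoetherianRing A]
    [IsLocalRing A] {x y : A} (hxy : IsExactZeroDivisorPair x y) (a : A) :
    (Matrix.toLin' (gammaMat x y a)).comp (Matrix.toLin' (etaMat x y a)) = 0 ∧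
    (Matrix.toLin' (etaMat x y a)).comp (Matrix.toLin' (gammaMat x y a)) = 0 ∧
    LinearMap.ker (Matrix.toLin' (gammaMat x y a)) =
      LinearMap.range (Matrix.toLin' (etaMat x y a)) ∧
    LinearMap.ker (Matrix.toLin' (etaMat x y a)) =
      LinearMap.range (Matrix.toLin' (gammaMat x y a)) ∧
    LinearMap.ker (Matrix.toLin' (gammaMat x y a)ᵀ) =
      LinearMap.range (Matrix.toLin' (etaMat x y a)ᵀ) ∧
    LinearMap.ker (Matrix.toLin' (etaMat x y a)ᵀ) =
      LinearMap.range (Matrix.toLin' (gammaMat x y a)ᵀ) :=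
  gamma_eta_complex_exact_general hxy.exact_mul hxy.symm.exact_mul a
end
end

section
/- Let A be a commutative noetherian local ring, let x, y ∈ A be an exact pair of zero divisors, and let a ∈ A. (a) If multiplication by a on A/(y) is injective, then G_a is isomorphic as an A-module to the ideal (y, a) of A. (b) If multiplication by a on A/(x) is injective, then H_a is isomorphic as an A-module to the ideal (x, a) of A. -/
/-!
Formalization of results from "Construction of totally reflexive modules
from an exact pair of zero divisors" by Henrik Holm.
-/

noncomputable section

/-!
The linear form `(u, v) ↦ u * y - v * a` on `A²` has image `(y, a)`. If `u * y = v * a`, then `v`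
is a multiple `t * y` because multiplication by `a` is injective on `A ⧸ (y)`, so `u - t * a`
annihilates `y` and is a multiple of `x`: thus `(u, v)` is in the image of `γ_a`. The case of
`H_a` follows because `η_a = [[y, -a], [0, x]]` is `γ_{-a}` with `x` and `y` interchanged.
-/

lemma isSMulRegular_neg {R M : Type*} [Ring R] [AddCommGroup M] [Module R M] {r : R}
    (hr : IsSMulRegular M r) : IsSMulRegular M (-r) := by
  simpa only [neg_mul, one_mul] using (isUnit_one.neg.isSMulRegular M).mul hr

section

variable {A : Type*} [CommRing A] {x y a : A}

lemma mem_range_toLin'_gammaMat {w : Fin 2 → A} :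
    w ∈ LinearMap.range (Matrix.toLin' (gammaMat x y a)) ↔
      ∃ s t, s * x + t * a = w 0 ∧ t * y = w 1 := by
  simp [gammaMat, Matrix.mulVec_eq_sum, Fin.exists_fin_succ_pi, funext_iff]

lemma range_linearCombination_pair_neg (y a : A) :
    LinearMap.range (Fintype.linearCombination A ![y, -a]) = Ideal.span {y, a} := by
  rw [Fintype.range_linearCombination, Matrix.range_cons_cons_empty, ← Ideal.span_pair_neg]

lemma exact_gammaMat_linearCombination (hy : ∀ b : A, b * y = 0 ↔ b ∈ Ideal.span {x})
    (ha : IsSMulRegular (A ⧸ Ideal.span {y}) a) :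
    Function.Exact (Matrix.toLin' (gammaMat x y a)) (Fintype.linearCombination A ![y, -a]) := by
  intro w
  rw [← LinearMap.coe_range, SetLike.mem_coe, mem_range_toLin'_gammaMat]
  simp only [Fintype.linearCombination_apply, Fin.sum_univ_two, Matrix.cons_val_zero,
    Matrix.cons_val_one, smul_eq_mul]
  constructor
  · intro hw
    have hmem : a • w 1 ∈ Ideal.span {y} :=
      Ideal.mem_span_singleton'.2 ⟨w 0, by rw [smul_eq_mul]; linear_combination hw⟩
    obtain ⟨t, ht⟩ := Ideal.mem_span_singleton'.1
      (mem_of_isSMulRegular_quotient_of_smul_mem ha hmem)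
    have hann : (w 0 - t * a) * y = 0 := by linear_combination hw - a * ht
    obtain ⟨s, hs⟩ := Ideal.mem_span_singleton'.1 ((hy _).1 hann)
    exact ⟨s, t, by linear_combination hs, ht⟩
  · rintro ⟨s, t, h0, h1⟩
    have hxy : x * y = 0 := (hy x).2 (Ideal.mem_span_singleton_self x)
    rw [← h0, ← h1]
    linear_combination s * hxy

/-- The isomorphism `G_a ≅ (y, a)` induced by the linear form `(u, v) ↦ u * y - v * a` on `A²`. -/
def gmodEquivSpanPair (hy : ∀ b : A, b * y = 0 ↔ b ∈ Ideal.span {x})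
    (ha : IsSMulRegular (A ⧸ Ideal.span {y}) a) :
    Gmod x y a ≃ₗ[A] ↥(Ideal.span ({y, a} : Set A)) :=
  Submodule.quotEquivOfEq _ _ (exact_gammaMat_linearCombination hy ha).linearMap_ker_eq.symm ≪≫ₗ
    LinearMap.quotKerEquivRange _ ≪≫ₗ
    LinearEquiv.ofEq _ _ (range_linearCombination_pair_neg y a)

/-- The isomorphism `H_a ≅ (x, a)`, read off from the one for `G_{-a}` with `x` and `y`
interchanged. -/
def hmodEquivSpanPair (hx : ∀ b : A, b * x = 0 ↔ b ∈ Ideal.span {y})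
    (ha : IsSMulRegular (A ⧸ Ideal.span {x}) a) :
    Hmod x y a ≃ₗ[A] ↥(Ideal.span ({x, a} : Set A)) :=
  gmodEquivSpanPair hx (isSMulRegular_neg ha) ≪≫ₗ LinearEquiv.ofEq _ _ (Ideal.span_pair_neg x a)

end

theorem G_H_iso_ideal_general {A : Type*} [CommRing A] {x y : A}
    (hxy : IsExactZeroDivisorPair x y) (a : A) :
    ((Function.Injective fun m : A ⧸ Ideal.span ({y} : Set A) => a • m) →
      Nonempty (Gmod x y a ≃ₗ[A] ↥(Ideal.span ({y, a} : Set A)))) ∧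
    ((Function.Injective fun m : A ⧸ Ideal.span ({x} : Set A) => a • m) →
      Nonempty (Hmod x y a ≃ₗ[A] ↥(Ideal.span ({x, a} : Set A)))) := by
  obtain ⟨-, -, hx, hy⟩ := hxy
  exact ⟨fun ha => ⟨gmodEquivSpanPair hy ha⟩, fun ha => ⟨hmodEquivSpanPair hx ha⟩⟩

/-- **Proposition (3.7).** For an exact pair of zero divisors `x, y` and
`a ∈ A`: (a) if multiplication by `a` on `A/(y)` is injective then
`G_a ≅ (y, a)`; (b) if multiplication by `a` on `A/(x)` is injective then
`H_a ≅ (x, a)`. -/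
theorem G_H_iso_ideal {A : Type*} [CommRing A] [IsNoetherianRing A]
    [IsLocalRing A] {x y : A} (hxy : IsExactZeroDivisorPair x y) (a : A) :
    ((Function.Injective fun m : A ⧸ Ideal.span ({y} : Set A) => a • m) →
      Nonempty (Gmod x y a ≃ₗ[A] ↥(Ideal.span ({y, a} : Set A)))) ∧
    ((Function.Injective fun m : A ⧸ Ideal.span ({x} : Set A) => a • m) →
      Nonempty (Hmod x y a ≃ₗ[A] ↥(Ideal.span ({x, a} : Set A)))) :=
  G_H_iso_ideal_general hxy a
end
end

section
/- Let A be a commutative noetherian local ring and let M be a finitely generated A-module. If A and Hom_A(M, M) are isomorphic as A-modules, then the canonical homomorphism of A-algebras χ : A → End_A(M), sending a to a · id_M, is an isomorphism. -/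
/-!
Formalization of results from "Construction of totally reflexive modules
from an exact pair of zero divisors" by Henrik Holm.
-/

noncomputable section

theorem algebraMap_end_bijective_general {A M : Type*} [CommSemiring A] [AddCommMonoid M]
    [Module A M] (e : A ≃ₗ[A] Module.End A M) :
    Function.Bijective (algebraMap A (Module.End A M)) :=
  bijective_algebraMap_of_linearEquiv e

/-- **Lemma (4.4).** Let `M` be a finitely generated `A`-module. If `A` and
`Hom_A(M, M)` are isomorphic as `A`-modules, then the canonical `A`-algebra
homomorphism `χ : A → End_A(M)`, `χ(a) = a · id_M`, is an isomorphism. -/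
theorem algebraMap_end_bijective {A : Type*} [CommRing A] [IsNoetherianRing A]
    [IsLocalRing A] (M : Type*) [AddCommGroup M] [Module A M]
    [Module.Finite A M] (h : Nonempty (A ≃ₗ[A] (M →ₗ[A] M))) :
    Function.Bijective (algebraMap A (Module.End A M)) := by
  obtain ⟨e⟩ := h
  exact algebraMap_end_bijective_general e
end
end

section
/- Let A be a commutative noetherian local ring and let x, y ∈ A be a regular exact pair of zero divisors. Let a, b ∈ A be elements such that (1) a or b is weakly regular on the A-module A/(x, y), and (2) a and b are not both units. Then the A-modules G_a and H_b are not isomorphic. -/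
/-!
Formalization of results from "Construction of totally reflexive modules
from an exact pair of zero divisors" by Henrik Holm.
-/

noncomputable section

/-!
For a matrix `M` over a commutative ring `A`, let `I(M)` be the ideal generated by its entries. A
surjection `coker N → coker M` between cokernels of matrices with the same number `r` of rows
induces a surjection `Aʳ → (A/I(M))ʳ`. Its kernel is exactly `I(M)Aʳ`, because surjective
endomorphisms of `(A/I(M))ʳ` are injective; hence `I(N) ≤ I(M)`. So `G_a ≅ H_b` forces
`(x, y, a) = (x, y, b) =: I`. On the other hand, comparing coordinates in the two relations of
`G_a`, the regularity hypotheses force every homomorphism `G_a → H_b` to send the first generator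
of `G_a` into `I H_b`. An isomorphism therefore puts that generator into `I G_a`; but
`G_a / I G_a` is free over `A / I` on the generators of `G_a`, whence `I = A`.
-/

section MatrixCoker

variable {A m n k : Type*} [CommRing A]

/-- The ideal generated by the entries of a matrix. For a matrix with `r ≥ 1` rows it is the
Fitting ideal of index `r - 1` of the cokernel; it serves to tell cokernels apart. -/
def entryIdeal (M : Matrix m n A) : Ideal A :=
  Ideal.span (Set.range fun ij : m × n => M ij.1 ij.2)

theorem entry_mem_entryIdeal (M : Matrix m n A) (i : m) (j : n) : M i j ∈ entryIdeal M :=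
  Ideal.subset_span ⟨(i, j), rfl⟩

theorem entryIdeal_le_iff {M : Matrix m n A} {I : Ideal A} :
    entryIdeal M ≤ I ↔ ∀ i j, M i j ∈ I := by
  simp only [entryIdeal, Ideal.span_le, Set.range_subset_iff, Prod.forall, SetLike.mem_coe]

theorem apply_mem_of_map_eq_zero_of_surjective [Finite m] {I : Ideal A}
    {f : (m → A) →ₗ[A] (m → A ⧸ I)} (hf : Function.Surjective f) {v : m → A} (hv : f v = 0)
    (i : m) : v i ∈ I := by
  classical
  have := Fintype.ofFinite m
  let g : (m → A ⧸ I) →ₗ[A ⧸ I] (m → A ⧸ I) :=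
    Fintype.linearCombination (A ⧸ I) fun j => f (Pi.single j 1)
  have hg (w : m → A) : g (fun j => Ideal.Quotient.mk I (w j)) = f w := by
    conv_rhs => rw [← (Pi.basisFun A m).sum_repr w, map_sum]
    simp only [g, Fintype.linearCombination_apply, map_smul, Pi.basisFun_repr, Pi.basisFun_apply]
    exact Finset.sum_congr rfl fun j _ => algebraMap_smul (A ⧸ I) (w j) _
  have hg_inj : Function.Injective g :=
    OrzechProperty.injective_of_surjective_endomorphism g fun u =>
      let ⟨w, hw⟩ := hf u
      ⟨_, (hg w).trans hw⟩
  have hv_mod : (fun j => Ideal.Quotient.mk I (v j)) = 0 :=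
    hg_inj ((hg v).trans (hv.trans (map_zero g).symm))
  exact Ideal.Quotient.eq_zero_iff_mem.1 (congrFun hv_mod i)

variable [Fintype n] [DecidableEq n] [Fintype k] [DecidableEq k]

/-- The cokernel of the linear map given by a matrix; reducible, so that `Gmod` and `Hmod` are
visibly instances of it. -/
abbrev MatrixCoker (M : Matrix m n A) : Type _ :=
  (m → A) ⧸ LinearMap.range (Matrix.toLin' M)

theorem mk_col_eq_zero (M : Matrix m n A) (j : n) :
    (Submodule.Quotient.mk (M.col j) : MatrixCoker M) = 0 :=
  (Submodule.Quotient.mk_eq_zero _).2 ⟨Pi.single j 1, by simp⟩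

/-- The reduction of `coker M` modulo the entries of `M`, identified with the free module
`(A / entryIdeal M)ᵐ`. -/
def cokerReduction (M : Matrix m n A) : MatrixCoker M →ₗ[A] (m → A ⧸ entryIdeal M) :=
  (LinearMap.range (Matrix.toLin' M)).liftQ ((entryIdeal M).mkQ.compLeft m) <| by
    rintro _ ⟨v, rfl⟩
    ext i
    exact Ideal.Quotient.eq_zero_iff_mem.2 <|
      Ideal.sum_mem _ fun j _ => Ideal.mul_mem_right _ _ (entry_mem_entryIdeal M i j)

theorem cokerReduction_mk (M : Matrix m n A) (v : m → A) (i : m) :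
    cokerReduction M (Submodule.Quotient.mk v) i = Ideal.Quotient.mk (entryIdeal M) (v i) :=
  rfl

theorem cokerReduction_surjective (M : Matrix m n A) :
    Function.Surjective (cokerReduction M) := by
  intro u
  choose v hv using fun i => Ideal.Quotient.mk_surjective (u i)
  exact ⟨Submodule.Quotient.mk v, funext hv⟩

theorem cokerReduction_eq_zero_of_mem_smul_top {M : Matrix m n A} {g : MatrixCoker M}
    (hg : g ∈ entryIdeal M • (⊤ : Submodule A (MatrixCoker M))) : cokerReduction M g = 0 := by
  suffices h : entryIdeal M • ⊤ ≤ LinearMap.ker (cokerReduction M) from h hg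
  refine Submodule.smul_le.2 fun r hr h _ => ?_
  obtain ⟨v, rfl⟩ := Submodule.Quotient.mk_surjective _ h
  ext i
  exact Ideal.Quotient.eq_zero_iff_mem.2 (Ideal.mul_mem_right _ _ hr)

theorem entryIdeal_le_of_surjective [Finite m] {M : Matrix m n A} {N : Matrix m k A}
    {f : MatrixCoker N →ₗ[A] MatrixCoker M} (hf : Function.Surjective f) :
    entryIdeal N ≤ entryIdeal M := by
  have hred : Function.Surjective
      (cokerReduction M ∘ₗ f ∘ₗ (LinearMap.range (Matrix.toLin' N)).mkQ) :=
    (cokerReduction_surjective M).comp (hf.comp (Submodule.mkQ_surjective _))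
  refine entryIdeal_le_iff.2 fun i j => ?_
  exact apply_mem_of_map_eq_zero_of_surjective hred (v := N.col j) (by simp [mk_col_eq_zero]) i

theorem entryIdeal_eq_of_linearEquiv [Finite m] {M : Matrix m n A} {N : Matrix m k A}
    (e : MatrixCoker M ≃ₗ[A] MatrixCoker N) : entryIdeal M = entryIdeal N :=
  le_antisymm (entryIdeal_le_of_surjective (f := e.toLinearMap) e.surjective)
    (entryIdeal_le_of_surjective (f := e.symm.toLinearMap) e.symm.surjective)

variable [DecidableEq m]

/-- The image in `coker M` of the `i`-th standard basis vector. -/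
def cokerGen (M : Matrix m n A) (i : m) : MatrixCoker M :=
  Submodule.Quotient.mk (Pi.single i 1)

theorem mk_eq_sum_smul_cokerGen [Fintype m] (M : Matrix m n A) (v : m → A) :
    (Submodule.Quotient.mk v : MatrixCoker M) = ∑ i, v i • cokerGen M i := by
  conv_lhs => rw [← (Pi.basisFun A m).sum_repr v]
  simp only [Pi.basisFun_repr, Pi.basisFun_apply]
  exact map_sum (LinearMap.range (Matrix.toLin' M)).mkQ _ _

theorem sum_entry_smul_cokerGen [Fintype m] (M : Matrix m n A) (j : n) :
    ∑ i, M i j • cokerGen M i = 0 :=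
  (mk_eq_sum_smul_cokerGen M (M.col j)).symm.trans (mk_col_eq_zero M j)

theorem entryIdeal_eq_top_of_cokerGen_mem {M : Matrix m n A} {i : m}
    (hi : cokerGen M i ∈ entryIdeal M • (⊤ : Submodule A (MatrixCoker M))) :
    entryIdeal M = ⊤ := by
  have hone := congrFun (cokerReduction_eq_zero_of_mem_smul_top hi) i
  rw [cokerGen, cokerReduction_mk, Pi.single_eq_same] at hone
  exact (Ideal.eq_top_iff_one _).2 (Ideal.Quotient.eq_zero_iff_mem.1 hone)

end MatrixCoker

section

open Ideal

variable {A : Type*} [CommRing A] {x y a b : A}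

theorem entryIdeal_gammaMat (x y a : A) : entryIdeal (gammaMat x y a) = span {x, y, a} := by
  apply le_antisymm
  · rw [entryIdeal_le_iff, Fin.forall_fin_two, Fin.forall_fin_two, Fin.forall_fin_two]
    exact ⟨⟨subset_span (by simp [gammaMat]), subset_span (by simp [gammaMat])⟩, zero_mem _,
      subset_span (by simp [gammaMat])⟩
  · simp only [span_le, Set.insert_subset_iff, Set.singleton_subset_iff]
    exact ⟨entry_mem_entryIdeal (gammaMat x y a) 0 0, entry_mem_entryIdeal (gammaMat x y a) 1 1,
      entry_mem_entryIdeal (gammaMat x y a) 0 1⟩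

theorem entryIdeal_etaMat (x y b : A) : entryIdeal (etaMat x y b) = span {x, y, b} := by
  change entryIdeal (gammaMat y x (-b)) = _
  simp only [entryIdeal_gammaMat, span_insert, span_singleton_neg, sup_left_comm]

theorem smul_cokerGen_gammaMat (x y a : A) : x • cokerGen (gammaMat x y a) 0 = 0 := by
  have h := sum_entry_smul_cokerGen (gammaMat x y a) 0
  rwa [Fin.sum_univ_two, show gammaMat x y a 1 0 = 0 from rfl, zero_smul, add_zero] at h

theorem smul_add_smul_cokerGen_gammaMat (x y a : A) :
    a • cokerGen (gammaMat x y a) 0 + y • cokerGen (gammaMat x y a) 1 = 0 :=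
  (Fin.sum_univ_two _).symm.trans (sum_entry_smul_cokerGen (gammaMat x y a) 1)

theorem Hmod_mk_eq_zero_iff {v : Fin 2 → A} :
    (Submodule.Quotient.mk v : Hmod x y b) = 0 ↔ ∃ s t, v 0 = y * s - b * t ∧ v 1 = x * t := by
  rw [Submodule.Quotient.mk_eq_zero]
  constructor
  · rintro ⟨w, rfl⟩
    exact ⟨w 0, w 1, by simp [etaMat, Matrix.mulVec, dotProduct, sub_eq_add_neg],
      by simp [etaMat, Matrix.mulVec, dotProduct]⟩
  · rintro ⟨s, t, h0, h1⟩
    refine ⟨![s, t], ?_⟩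
    ext i
    fin_cases i <;> simp [etaMat, h0, h1, mul_comm, sub_eq_add_neg]

/-- If `(p₀, p₁)` are the coordinates in `H_b` of the image of the first generator of `G_a`, then
`h₀` and `h₁` come from the relation given by the first column of `γ_a`, and `ha` from the second
coordinate of the relation given by the second column. -/
theorem coordinates_mem_span (hann : ∀ r, r * x = 0 → r ∈ span {x, y})
    (hreg : span {x} ⊓ span {y} = ⊥)
    (hab : IsSMulRegular (A ⧸ span {x, y}) a ∨ IsSMulRegular (A ⧸ span {x, y}) b)
    {p₀ p₁ s t : A} (h₀ : x * p₀ = y * s - b * t) (h₁ : x * p₁ = x * t)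
    (ha : a * p₁ ∈ span {x, y}) : p₀ ∈ span {x, y, b} ∧ p₁ ∈ span {x, y} := by
  simp only [isSMulRegular_quotient_iff_mem_of_smul_mem, smul_eq_mul] at hab
  have hsub : t - p₁ ∈ span {x, y} := hann _ (by linear_combination -h₁)
  have ht : t ∈ span {x, y} := by
    rcases hab with ha_reg | hb_reg
    · exact (Submodule.sub_mem_iff_left _ (ha_reg _ ha)).1 hsub
    · exact hb_reg _ (mem_span_pair.2 ⟨-p₀, s, by linear_combination -h₀⟩)
  have hp₁ : p₁ ∈ span {x, y} := (Submodule.sub_mem_iff_right _ ht).1 hsub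
  refine ⟨?_, hp₁⟩
  obtain ⟨c, d, hcd⟩ := mem_span_pair.1 ht
  have hzero : (p₀ + b * c) * x = 0 := by
    rw [← mem_bot, ← hreg]
    refine ⟨mem_span_singleton'.2 ⟨_, rfl⟩, mem_span_singleton'.2 ⟨s - b * d, ?_⟩⟩
    linear_combination -h₀ - b * hcd
  have hsum : p₀ + b * c ∈ span {x, y, b} := span_mono (by grind) (hann _ hzero)
  exact (Submodule.add_mem_iff_left _ (mul_mem_right c _ (subset_span (by simp)))).1 hsum

theorem map_cokerGen_gammaMat_mem_smul_top (hann : ∀ r, r * x = 0 → r ∈ span {x, y})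
    (hreg : span {x} ⊓ span {y} = ⊥)
    (hab : IsSMulRegular (A ⧸ span {x, y}) a ∨ IsSMulRegular (A ⧸ span {x, y}) b)
    (f : Gmod x y a →ₗ[A] Hmod x y b) :
    f (cokerGen (gammaMat x y a) 0) ∈ span {x, y, b} • (⊤ : Submodule A (Hmod x y b)) := by
  obtain ⟨p, hp⟩ := Submodule.Quotient.mk_surjective _ (f (cokerGen (gammaMat x y a) 0))
  obtain ⟨q, hq⟩ := Submodule.Quotient.mk_surjective _ (f (cokerGen (gammaMat x y a) 1))
  have hxp : (Submodule.Quotient.mk (x • p) : Hmod x y b) = 0 := by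
    rw [Submodule.Quotient.mk_smul, hp, ← map_smul, smul_cokerGen_gammaMat, map_zero]
  have hapq : (Submodule.Quotient.mk (a • p + y • q) : Hmod x y b) = 0 := by
    rw [Submodule.Quotient.mk_add, Submodule.Quotient.mk_smul, Submodule.Quotient.mk_smul, hp, hq,
      ← map_smul, ← map_smul, ← map_add, smul_add_smul_cokerGen_gammaMat, map_zero]
  obtain ⟨s, t, h₀ : x * p 0 = _, h₁ : x * p 1 = _⟩ := Hmod_mk_eq_zero_iff.1 hxp
  obtain ⟨-, w, -, hw : a * p 1 + y * q 1 = _⟩ := Hmod_mk_eq_zero_iff.1 hapq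
  have hap : a * p 1 ∈ span {x, y} :=
    mem_span_pair.2 ⟨w, -q 1, by linear_combination -hw⟩
  obtain ⟨hp₀, hp₁⟩ := coordinates_mem_span hann hreg hab h₀ h₁ hap
  rw [← hp, mk_eq_sum_smul_cokerGen, Fin.sum_univ_two]
  exact add_mem (Submodule.smul_mem_smul hp₀ trivial)
    (Submodule.smul_mem_smul (span_mono (by grind) hp₁) trivial)

theorem G_not_iso_H_general {A : Type*} [CommRing A] {x y : A}
    (hann : ∀ r, r * x = 0 → r ∈ span {x, y}) (hreg : span {x} ⊓ span {y} = ⊥) {a b : A}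
    (hab : IsSMulRegular (A ⧸ span {x, y}) a ∨ IsSMulRegular (A ⧸ span {x, y}) b)
    (hu : ¬ (span {x, y, a} = ⊤ ∧ span {x, y, b} = ⊤)) :
    IsEmpty (Gmod x y a ≃ₗ[A] Hmod x y b) := by
  refine ⟨fun e => hu ?_⟩
  have hI : span {x, y, a} = span {x, y, b} := by
    rw [← entryIdeal_gammaMat, ← entryIdeal_etaMat, entryIdeal_eq_of_linearEquiv e]
  have hmem : cokerGen (gammaMat x y a) 0 ∈
      entryIdeal (gammaMat x y a) • (⊤ : Submodule A (Gmod x y a)) := by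
    have h := Submodule.mem_map_of_mem (f := e.symm.toLinearMap)
      (map_cokerGen_gammaMat_mem_smul_top hann hreg hab e.toLinearMap)
    rw [Submodule.map_smul''] at h
    rw [entryIdeal_gammaMat, hI]
    simpa using h
  have htop : span {x, y, a} = ⊤ :=
    (entryIdeal_gammaMat x y a).symm.trans (entryIdeal_eq_top_of_cokerGen_mem hmem)
  exact ⟨htop, hI.symm.trans htop⟩

theorem isUnit_of_span_eq_top [IsLocalRing A] (hx : ¬ IsUnit x) (hy : ¬ IsUnit y)
    (h : span {x, y, a} = ⊤) : IsUnit a := by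
  by_contra ha
  have hle : span {x, y, a} ≤ IsLocalRing.maximalIdeal A := by
    simp [span_le, Set.insert_subset_iff, hx, hy, ha]
  exact (IsLocalRing.maximalIdeal.isMaximal A).ne_top (top_le_iff.1 (h ▸ hle))

end

/-- **Theorem (5.1).** Let `x, y` be a regular exact pair of zero divisors and
let `a, b ∈ A` be such that (1) `a` or `b` is weakly regular on `A/(x, y)` and
(2) `a` and `b` are not both units. Then `G_a` and `H_b` are not isomorphic. -/
theorem G_not_iso_H {A : Type*} [CommRing A] [IsNoetherianRing A]
    [IsLocalRing A] {x y : A} (hxy : IsExactZeroDivisorPair x y)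
    (hreg : Ideal.span ({x} : Set A) ⊓ Ideal.span ({y} : Set A) = ⊥) {a b : A}
    (hab : (Function.Injective
        fun m : A ⧸ Ideal.span ({x, y} : Set A) => a • m) ∨
      (Function.Injective
        fun m : A ⧸ Ideal.span ({x, y} : Set A) => b • m))
    (hu : ¬ (IsUnit a ∧ IsUnit b)) :
    IsEmpty (Gmod x y a ≃ₗ[A] Hmod x y b) := by
  obtain ⟨hx, hy, hann, -⟩ := hxy
  exact G_not_iso_H_general (fun r hr => Ideal.span_mono (by simp) ((hann r).1 hr)) hreg hab
    fun h => hu ⟨isUnit_of_span_eq_top hx hy h.1, isUnit_of_span_eq_top hx hy h.2⟩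
end
end
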